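/- Under the compact nonzero-sum game setup with the quantization condition lim_{δ→0} ω_δ(2δ) = 0 and discount factor β ∈ (0,1), for each δ > 0 let π*_δ be a stationary perfect Nash equilibrium of the finite δ-model (which exists by Fink's theorem). Then for each player i = 1,…,N, sup_{x∈X} |Ĵ*_δ(π^{*,-i}_δ; x) − J*(π^{*,-i}_δ; x)| → 0 as δ → 0, where Ĵ*_δ(π^{*,-i}_δ;·) is the piecewise-constant extension to X of the finite-model best-response value and J*(π^{*,-i}_δ;·) is the original-model discounted best-response value against the extended equilibrium policies. -/

import Mathlib

open MeasureTheory Filter Topology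

noncomputable section

/-- Total variation distance between two measures:
`‖μ − ν‖_TV = 2 sup_{D measurable} |μ(D) − ν(D)|`. -/
def tvDist {α : Type*} [MeasurableSpace α] (μ ν : Measure α) : ℝ :=
  2 * ⨆ D : {D : Set α // MeasurableSet D}, |(μ D.1).toReal - (ν D.1).toReal|

/-- The normalized restriction `ν^z_δ` of `ν` to the quantization cell `Q⁻¹{z}`. -/
def cellMeasure {X : Type*} [MeasurableSpace X] (ν : Measure X) (Q : X → X) (z : X) :
    Measure X :=
  (ν (Q ⁻¹' {z}))⁻¹ • ν.restrict (Q ⁻¹' {z})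



lemma cont_int {Y X : Type*} [TopologicalSpace Y] [FirstCountableTopology Y] [MeasurableSpace X]
    (P : Y → Measure X) (hP : ∀ y, IsProbabilityMeasure (P y))
    (h : ∀ D : Set X, MeasurableSet D → Continuous fun y => (P y D).toReal)
    (f : X → ℝ) (hf : Measurable f) (M : ℝ) (hM : ∀ x, |f x| ≤ M) :
    Continuous fun y => ∫ x, f x ∂(P y) := by
  have hint : ∀ y, Integrable f (P y) := fun y =>
    Integrable.of_bound hf.aestronglyMeasurable M (ae_of_all _ fun x => by simpa using hM x)
  have e : ∀ y, ∫ x, f x ∂(P y) = (∫ t in Set.Ioc 0 (2*M), (P y).real {a | t ≤ f a + M}) - M := by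
    intro y
    have := Integrable.integral_eq_integral_Ioc_meas_le (μ := P y) (f := fun x => f x + M) (M := 2*M)
      ((hint y).add (integrable_const M))
      (ae_of_all _ fun x => by have := abs_le.1 (hM x); simp; linarith)
      (ae_of_all _ fun x => by have := abs_le.1 (hM x); simp; linarith)
    rw [← this, integral_add (hint y) (integrable_const M)]
    simp
  simp_rw [e]
  refine Continuous.sub ?_ continuous_const
  refine continuous_of_dominated (bound := fun _ => 1) ?_ ?_ (integrable_const _) ?_
  · intro y
    refine (Antitone.measurable ?_).aestronglyMeasurable
    intro s t hst
    exact measureReal_mono (fun a ha => le_trans hst ha)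
  · intro y
    refine ae_of_all _ fun t => ?_
    rw [Real.norm_of_nonneg measureReal_nonneg]
    exact measureReal_le_one
  · exact ae_of_all _ fun t => h _ (measurableSet_le measurable_const (hf.add_const M))

lemma aem_core {Y X : Type*} [TopologicalSpace Y] [TopologicalSpace.PseudoMetrizableSpace Y]
    [SecondCountableTopology Y] [MeasurableSpace X]
    (P : Y → Measure X) (hP : ∀ y, IsProbabilityMeasure (P y))
    (h : ∀ D : Set X, MeasurableSet D → Continuous fun y => (P y D).toReal)
    (J : X → ℝ) (M : ℝ) (hM : ∀ x, |J x| ≤ M) :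
    IsClosed {y | AEMeasurable J (P y)} ∧ ∃ g : Y → ℝ, Continuous g ∧
      ∀ y, AEMeasurable J (P y) → ∫ x, J x ∂(P y) = g y := by
  set E := {y | AEMeasurable J (P y)} with hE
  obtain ⟨t, htE, htc, ht⟩ :=
    (TopologicalSpace.IsSeparable.of_separableSpace E).exists_countable_dense_subset
  haveI : Countable t := htc.to_subtype
  have hsum : AEMeasurable J (Measure.sum fun y : t => P y) := by
    rw [aemeasurable_sum_measure_iff]
    exact fun y => htE y.2
  obtain ⟨f0, hf0, hJf⟩ := hsum
  obtain ⟨Z, hZs, hZm, hZ0⟩ := exists_measurable_superset_of_null (ae_iff.1 hJf)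
  have hZt : ∀ y ∈ t, (P y Z).toReal = 0 := by
    intro y hy
    have := (Measure.sum_apply_eq_zero.1 hZ0) ⟨y, hy⟩
    simp [this]
  have hZc : ∀ y ∈ closure t, P y Z = 0 := by
    intro y hy
    have hc : IsClosed {y | (P y Z).toReal = 0} := isClosed_eq (h Z hZm) continuous_const
    have : (P y Z).toReal = 0 := closure_minimal (fun y hy => hZt y hy) hc hy
    have := hP y
    rcases (ENNReal.toReal_eq_zero_iff _).1 ‹(P y Z).toReal = 0› with h | h
    · exact h
    · exact absurd h (measure_ne_top _ _)
  set f : X → ℝ := fun x => max (-M) (min M (f0 x)) with hf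
  have hfm : Measurable f := measurable_const.max (measurable_const.min hf0)
  have hae : ∀ y ∈ closure t, J =ᵐ[P y] f := by
    intro y hy
    rw [Filter.EventuallyEq, ae_iff]
    refine measure_mono_null (fun x hx => ?_) (hZc y hy)
    by_contra hxZ
    have hx' : J x = f0 x := by
      by_contra hne
      exact hxZ (hZs hne)
    apply hx
    have := abs_le.1 (hM x)
    simp only [hf, ← hx']
    rw [min_eq_right this.2, max_eq_right this.1]
  refine ⟨?_, fun y => ∫ x, f x ∂(P y), ?_, ?_⟩
  · rw [← closure_eq_iff_isClosed]
    refine subset_antisymm ?_ subset_closure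
    intro y hy
    have : y ∈ closure t := closure_minimal ht isClosed_closure hy
    exact ⟨f, hfm, hae y this⟩
  · refine cont_int P hP h f hfm |M| fun x => ?_
    have h0 := le_abs_self M
    have h0' := neg_abs_le M
    rw [abs_le]
    constructor
    · exact le_trans (by linarith) (le_max_left _ _)
    · refine max_le ?_ ((min_le_left _ _).trans h0)
      linarith [(abs_nonneg _).trans (hM x)]
  · intro y hy
    exact integral_congr_ae (hae y (ht hy))

lemma sc_inter {Y : Type*} [TopologicalSpace Y] [T2Space Y] {s t : Set Y} (hs : IsSigmaCompact s)
    (ht : IsSigmaCompact t) : IsSigmaCompact (s ∩ t) := by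
  obtain ⟨K, hK, rfl⟩ := hs
  obtain ⟨L, hL, rfl⟩ := ht
  have : (⋃ n, K n) ∩ (⋃ n, L n) = ⋃ q : ℕ × ℕ, K q.1 ∩ L q.2 := by
    ext x; simp
  rw [this]
  exact isSigmaCompact_iUnion_of_isCompact _ fun q => (hK q.1).inter (hL q.2)

lemma sc_open {Y : Type*} [MetricSpace Y] [CompactSpace Y] {s : Set Y} (hs : IsOpen s) :
    IsSigmaCompact s := by
  obtain ⟨F, hF, -, rfl, -⟩ := hs.exists_iUnion_isClosed
  exact isSigmaCompact_iUnion_of_isCompact _ fun n => (hF n).isCompact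

lemma sc_piece {Y : Type*} [MetricSpace Y] [CompactSpace Y] {E : Set Y} (hE : IsClosed E)
    (F h1 h2 : Y → ℝ) (c1 : Continuous h1) (c2 : Continuous h2)
    (e1 : ∀ y ∈ E, F y = h1 y) (e2 : ∀ y ∉ E, F y = h2 y) (r : ℝ) :
    IsSigmaCompact {y | F y < r} := by
  have : {y | F y < r} = ⋃ b : Bool, cond b (E ∩ {y | h1 y < r}) (Eᶜ ∩ {y | h2 y < r}) := by
    ext y
    by_cases hy : y ∈ E
    · simp [hy, e1 y hy]
    · simp [hy, e2 y hy]
  rw [this]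
  refine isSigmaCompact_iUnion _ ?_
  rintro (_ | _)
  · exact sc_inter (sc_open hE.isOpen_compl) (sc_open (isOpen_lt c2 continuous_const))
  · exact sc_inter hE.isCompact.isSigmaCompact (sc_open (isOpen_lt c1 continuous_const))

lemma sc_sum {Y ι : Type*} [MetricSpace Y] [CompactSpace Y] (s : Finset ι) (F : ι → Y → ℝ)
    (hF : ∀ b ∈ s, ∀ r, IsSigmaCompact {y | F b y < r}) (r : ℝ) :
    IsSigmaCompact {y | ∑ b ∈ s, F b y < r} := by
  classical
  induction s using Finset.induction_on generalizing r with
  | empty =>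
    simp only [Finset.sum_empty]
    exact sc_open (isOpen_lt continuous_const continuous_const)
  | insert b s hb ih =>
    have : {y | ∑ b ∈ insert b s, F b y < r} =
        ⋃ q : ℚ, {y | F b y < q} ∩ {y | ∑ b ∈ s, F b y < r - q} := by
      ext y
      simp only [Finset.sum_insert hb, Set.mem_setOf_eq, Set.mem_iUnion, Set.mem_inter_iff]
      constructor
      · intro h
        obtain ⟨q, h1, h2⟩ := exists_rat_btwn (show F b y < r - ∑ b ∈ s, F b y by linarith)
        exact ⟨q, h1, by linarith⟩
      · rintro ⟨q, h1, h2⟩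
        linarith
    rw [this]
    exact isSigmaCompact_iUnion _ fun q => sc_inter (hF b (Finset.mem_insert_self _ _) _)
      (ih (fun b' hb' => hF b' (Finset.mem_insert_of_mem hb')) _)

lemma meas_inf {X A : Type*} [MetricSpace X] [MeasurableSpace X] [BorelSpace X]
    [TopologicalSpace A] [Nonempty A] (F : X × A → ℝ) (hF : ∀ r, IsSigmaCompact {q | F q < r})
    (M : ℝ) (hM : ∀ q, M ≤ F q) : Measurable fun x => ⨅ a, F (x, a) := by
  refine measurable_of_Iio fun r => ?_
  have : (fun x => ⨅ a, F (x, a)) ⁻¹' Set.Iio r = Prod.fst '' {q | F q < r} := by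
    ext x
    have hb : BddBelow (Set.range fun a => F (x, a)) := ⟨M, by rintro _ ⟨a, rfl⟩; exact hM _⟩
    simp only [Set.mem_preimage, Set.mem_Iio, Set.mem_image, Set.mem_setOf_eq, Prod.exists,
      exists_and_right, exists_eq_right]
    exact ciInf_lt_iff hb
  rw [this]
  obtain ⟨K, hK, e⟩ := (hF r).image continuous_fst
  rw [← e]
  exact MeasurableSet.iUnion fun n => (hK n).measurableSet

lemma int_fin {B : Type*} [MeasurableSpace B] [MeasurableSingletonClass B] (μ : Measure B)
    [IsProbabilityMeasure μ] (s : Finset B) (hs : μ s = 1) (φ : B → ℝ) :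
    Integrable φ μ ∧ ∫ b, φ b ∂μ = ∑ b ∈ s, μ.real {b} * φ b := by
  have hr : μ.restrict s = μ := by
    rw [Measure.restrict_eq_self_of_ae_mem]
    exact (mem_ae_iff_prob_eq_one s.measurableSet).2 hs
  have hi : IntegrableOn φ s μ := IntegrableOn.finset
  have h2 := setIntegral_finset s hi
  rw [IntegrableOn, hr] at hi
  rw [hr] at h2
  exact ⟨hi, by simpa using h2⟩

lemma pi_upd {N : ℕ} {A : Fin N → Type*} [∀ i, MeasurableSpace (A i)]
    (m : ∀ i, Measure (A i)) (hm : ∀ i, IsProbabilityMeasure (m i)) (i : Fin N) (a : A i) :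
    Measure.pi (Function.update m i (Measure.dirac a)) =
      (Measure.pi m).map (fun b => Function.update b i a) := by
  have hm' : ∀ j, IsProbabilityMeasure (Function.update m i (Measure.dirac a) j) := by
    intro j
    by_cases hj : j = i
    · subst hj; simp; infer_instance
    · simp [hj]; infer_instance
  refine Measure.pi_eq fun s hs => ?_
  rw [Measure.map_apply measurable_update_left (MeasurableSet.univ_pi hs)]
  by_cases ha : a ∈ s i
  · have : (fun b : ∀ j, A j => Function.update b i a) ⁻¹' Set.pi Set.univ s =
        Set.pi Set.univ (Function.update s i Set.univ) := by
      ext b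
      simp only [Set.mem_preimage, Set.mem_univ_pi]
      refine forall_congr' fun j => ?_
      by_cases hj : j = i
      · subst hj; simp [ha]
      · simp [hj]
    rw [this, Measure.pi_pi]
    refine Finset.prod_congr rfl fun j _ => ?_
    by_cases hj : j = i
    · subst hj; simp [ha]
    · simp [hj]
  · have : (fun b : ∀ j, A j => Function.update b i a) ⁻¹' Set.pi Set.univ s = ∅ := by
      ext b
      simp only [Set.mem_preimage, Set.mem_univ_pi, Set.mem_empty_iff_false, iff_false]
      intro h
      exact ha (by simpa using h i)
    rw [this, measure_empty]
    symm
    refine Finset.prod_eq_zero (Finset.mem_univ i) ?_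
    simp [ha, hs i]

lemma int_upd {N : ℕ} {A : Fin N → Type*} [∀ i, MeasurableSpace (A i)]
    [∀ i, MeasurableSingletonClass (A i)]
    (m : ∀ i, Measure (A i)) (hm : ∀ i, IsProbabilityMeasure (m i)) 
    (S : ∀ i, Finset (A i)) (hS : ∀ i, m i (S i) = 1) :
    ∃ w : (∀ i, A i) → ℝ, (∀ b, 0 ≤ w b) ∧ ∑ b ∈ Fintype.piFinset S, w b = 1 ∧
      ∀ i a (φ : (∀ i, A i) → ℝ),
      ∫ b, φ b ∂(Measure.pi (Function.update m i (Measure.dirac a))) =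
      ∑ b ∈ Fintype.piFinset S, w b * φ (Function.update b i a) := by
  have h1 : Measure.pi m (Fintype.piFinset S : Finset (∀ i, A i)) = 1 := by
    rw [Fintype.coe_piFinset, Measure.pi_pi]
    simp [hS]
  refine ⟨fun b => (Measure.pi m).real {b}, fun b => measureReal_nonneg, ?_, ?_⟩
  · have := (int_fin (Measure.pi m) _ h1 (fun _ => 1)).2
    simpa using this.symm
  · intro i a φ
    classical
    rw [pi_upd m hm i a]
    have hu : Measurable (fun b : ∀ j, A j => Function.update b i a) := measurable_update_left
    haveI := Measure.isProbabilityMeasure_map (μ := Measure.pi m) hu.aemeasurable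
    have h2 : (Measure.pi m).map (fun b => Function.update b i a)
        (((Fintype.piFinset S).image (fun b => Function.update b i a) : Finset _)) = 1 := by
      refine le_antisymm prob_le_one ?_
      rw [Measure.map_apply hu (Finset.measurableSet _), ← h1]
      refine measure_mono fun b hb => ?_
      simp only [Set.mem_preimage, Finset.coe_image]
      exact ⟨b, hb, rfl⟩
    rw [integral_map hu.aemeasurable (int_fin _ _ h2 φ).1.aestronglyMeasurable]
    exact (int_fin _ _ h1 _).2

lemma tv_term_le {α : Type*} [MeasurableSpace α] (μ ν : Measure α) [IsProbabilityMeasure μ]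
    [IsProbabilityMeasure ν] (D : Set α) : |(μ D).toReal - (ν D).toReal| ≤ 1 := by
  have h1 : (μ D).toReal ≤ 1 := measureReal_le_one (μ := μ) (s := D)
  have h2 : (ν D).toReal ≤ 1 := measureReal_le_one (μ := ν) (s := D)
  have h3 : 0 ≤ (μ D).toReal := ENNReal.toReal_nonneg
  have h4 : 0 ≤ (ν D).toReal := ENNReal.toReal_nonneg
  rw [abs_le]; constructor <;> linarith

lemma tv_le_two {α : Type*} [MeasurableSpace α] (μ ν : Measure α) [IsProbabilityMeasure μ]
    [IsProbabilityMeasure ν] : tvDist μ ν ≤ 2 := by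
  unfold tvDist
  have : (⨆ D : {D : Set α // MeasurableSet D}, |(μ D.1).toReal - (ν D.1).toReal|) ≤ 1 :=
    Real.iSup_le (fun D => tv_term_le μ ν D.1) zero_le_one
  linarith

lemma tv_ge {α : Type*} [MeasurableSpace α] (μ ν : Measure α) [IsProbabilityMeasure μ]
    [IsProbabilityMeasure ν] (D : Set α) (hD : MeasurableSet D) :
    2 * |μ.real D - ν.real D| ≤ tvDist μ ν := by
  unfold tvDist
  have := le_ciSup (f := fun D : {D : Set α // MeasurableSet D} =>
    |(μ D.1).toReal - (ν D.1).toReal|) ⟨1, by rintro _ ⟨D, rfl⟩; exact tv_term_le μ ν D.1⟩ ⟨D, hD⟩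
  simp only [Measure.real]
  simp only at this
  linarith

lemma tv_bound {X : Type*} [MeasurableSpace X] [MeasurableSingletonClass X] (μ ν : Measure X)
    [IsProbabilityMeasure μ] [IsProbabilityMeasure ν] (Q : X → X) (hQ : Measurable Q)
    (S : Finset X) (hS : ∀ x, Q x ∈ S) (f : X → ℝ) (hfQ : ∀ x, f x = f (Q x)) (K : ℝ)
    (hK : ∀ x, |f x| ≤ K) :
    |∫ x, f x ∂μ - ∫ x, f x ∂ν| ≤ K * tvDist (μ.map Q) (ν.map Q) := by
  have key : ∀ (m : Measure X) [IsProbabilityMeasure m],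
      ∫ x, f x ∂m = ∑ z ∈ S, (m.map Q).real {z} * f z := by
    intro m _
    have := Measure.isProbabilityMeasure_map (μ := m) hQ.aemeasurable
    have h1 : (m.map Q) S = 1 := by
      rw [Measure.map_apply hQ S.measurableSet]
      have : Q ⁻¹' (S : Set X) = Set.univ := Set.eq_univ_of_forall hS
      rw [this, measure_univ]
    have h2 := int_fin (m.map Q) S h1 f
    rw [← h2.2, integral_map hQ.aemeasurable h2.1.aestronglyMeasurable]
    exact integral_congr_ae (ae_of_all _ hfQ)
  rw [key μ, key ν]
  have := Measure.isProbabilityMeasure_map (μ := μ) hQ.aemeasurable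
  have := Measure.isProbabilityMeasure_map (μ := ν) hQ.aemeasurable
  generalize μ.map Q = m at *
  generalize ν.map Q = n at *
  obtain ⟨x0⟩ : Nonempty X := m.nonempty_of_neZero
  have hK0 : 0 ≤ K := (abs_nonneg _).trans (hK x0)
  rw [← Finset.sum_sub_distrib]
  calc |∑ z ∈ S, (m.real {z} * f z - n.real {z} * f z)|
      ≤ ∑ z ∈ S, |m.real {z} * f z - n.real {z} * f z| := Finset.abs_sum_le_sum_abs _ _
    _ ≤ ∑ z ∈ S, K * |m.real {z} - n.real {z}| := by
        refine Finset.sum_le_sum fun z _ => ?_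
        rw [← sub_mul, abs_mul, mul_comm]
        exact mul_le_mul_of_nonneg_right (hK z) (abs_nonneg _)
    _ = K * ∑ z ∈ S, |m.real {z} - n.real {z}| := by rw [Finset.mul_sum]
    _ ≤ K * tvDist m n := by
        refine mul_le_mul_of_nonneg_left ?_ hK0
        classical
        set d : X → ℝ := fun z => m.real {z} - n.real {z} with hd
        have hT : ∀ T : Finset X, ∑ z ∈ T, d z = m.real T - n.real T := by
          intro T
          simp only [hd, Finset.sum_sub_distrib]
          rw [sum_measureReal_singleton, sum_measureReal_singleton]
        rw [← Finset.sum_filter_add_sum_filter_not S (fun z => 0 ≤ d z)]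
        have e1 : ∑ z ∈ S with 0 ≤ d z, |d z| = ∑ z ∈ S with 0 ≤ d z, d z :=
          Finset.sum_congr rfl fun z hz => abs_of_nonneg (Finset.mem_filter.1 hz).2
        have e2 : ∑ z ∈ S with ¬ 0 ≤ d z, |d z| = -∑ z ∈ S with ¬ 0 ≤ d z, d z := by
          rw [← Finset.sum_neg_distrib]
          exact Finset.sum_congr rfl fun z hz =>
            abs_of_neg (not_le.1 (Finset.mem_filter.1 hz).2)
        rw [e1, e2, hT, hT]
        have a1 := tv_ge m n _ (Finset.measurableSet {z ∈ S | 0 ≤ d z})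
        have a2 := tv_ge m n _ (Finset.measurableSet {z ∈ S | ¬ 0 ≤ d z})
        have b1 := le_abs_self (m.real ({z ∈ S | 0 ≤ d z} : Finset X) - n.real ({z ∈ S | 0 ≤ d z} : Finset X))
        have b2 := neg_abs_le (m.real ({z ∈ S | ¬ 0 ≤ d z} : Finset X) - n.real ({z ∈ S | ¬ 0 ≤ d z} : Finset X))
        linarith

lemma meas_of_cells {X : Type*} [MeasurableSpace X] [MeasurableSingletonClass X] 
    (Q : X → X) (hQ : Measurable Q) (S : Finset X) (hS : ∀ x, Q x ∈ S) (J : X → ℝ)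
    (g : X → X → ℝ) (hg : ∀ z, Measurable (g z)) (hJ : ∀ x, J x = g (Q x) x) : Measurable J := by
  intro s hs
  have : J ⁻¹' s = ⋃ z ∈ S, (Q ⁻¹' {z} ∩ g z ⁻¹' s) := by
    ext x
    simp only [Set.mem_preimage, Set.mem_iUnion, Set.mem_inter_iff, Set.mem_singleton_iff, hJ x]
    constructor
    · intro h
      exact ⟨Q x, hS x, rfl, h⟩
    · rintro ⟨z, _, rfl, h⟩
      exact h
  rw [this]
  exact Finset.measurableSet_biUnion _ fun z _ => (hQ (measurableSet_singleton z)).inter (hg z hs)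

lemma int_abs_le {X : Type*} [MeasurableSpace X] (μ : Measure X) [IsProbabilityMeasure μ]
    (f : X → ℝ) (M : ℝ) (h : ∀ x, |f x| ≤ M) : |∫ x, f x ∂μ| ≤ M := by
  have := norm_integral_le_of_norm_le_const (μ := μ) (f := f) (C := M) (ae_of_all _ h)
  simpa using this

lemma wsum_le {B : Type*} (S : Finset B) (w φ ψ : B → ℝ) (hw : ∀ b, 0 ≤ w b)
    (h1 : ∑ b ∈ S, w b = 1) (ε : ℝ) (h : ∀ b, |φ b - ψ b| ≤ ε) :
    |∑ b ∈ S, w b * φ b - ∑ b ∈ S, w b * ψ b| ≤ ε := by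
  rw [← Finset.sum_sub_distrib]
  calc _ ≤ ∑ b ∈ S, |w b * φ b - w b * ψ b| := Finset.abs_sum_le_sum_abs _ _
    _ ≤ ∑ b ∈ S, w b * ε := by
        refine Finset.sum_le_sum fun b _ => ?_
        rw [← mul_sub, abs_mul, abs_of_nonneg (hw b)]
        exact mul_le_mul_of_nonneg_left (h b) (hw b)
    _ = ε := by rw [← Finset.sum_mul, h1, one_mul]

lemma inf_le_inf_add {A : Type*} [Nonempty A] (f g : A → ℝ) (M ε : ℝ) (hf : ∀ a, M ≤ f a)
    (h : ∀ a, |f a - g a| ≤ ε) : ⨅ a, f a ≤ (⨅ a, g a) + ε := by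
  rw [← sub_le_iff_le_add]
  refine le_ciInf fun a => ?_
  have := ciInf_le (f := f) ⟨M, by rintro _ ⟨a, rfl⟩; exact hf a⟩ a
  have := (abs_le.1 (h a)).2
  linarith

section core
variable {X : Type*} [MetricSpace X] [CompactSpace X] [MeasurableSpace X] [BorelSpace X]
    {N : ℕ} {A : Fin N → Type*} [∀ i, MetricSpace (A i)] [∀ i, CompactSpace (A i)]
    [∀ i, Nonempty (A i)]

lemma js_meas (c : X → (∀ i, A i) → ℝ)
    (hc : Continuous fun q : X × (∀ i, A i) => c q.1 q.2)
    (p : X → (∀ i, A i) → Measure X)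
    (hp_prob : ∀ x a, IsProbabilityMeasure (p x a))
    (hp_setwise : ∀ D : Set X, MeasurableSet D →
      Continuous fun q : X × (∀ i, A i) => (p q.1 q.2 D).toReal)
    (β : ℝ) (hβ : 0 ≤ β) (S : Finset X) (Q : X → X) (hQ : Measurable Q) (hS : ∀ x, Q x ∈ S)
    (w : X → (∀ i, A i) → ℝ) (hw : ∀ z b, 0 ≤ w z b) (B : Finset (∀ i, A i))
    (hw1 : ∀ z, ∑ b ∈ B, w z b = 1)
    (C : ℝ) (hC : ∀ x b, |c x b| ≤ C)
    (i : Fin N) (J : X → ℝ) (M : ℝ) (hM : ∀ x, |J x| ≤ M)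
    (hJ : ∀ x, J x = ⨅ a : A i, ∑ b ∈ B, w (Q x) b * (c x (Function.update b i a) +
      β * ∫ y, J y ∂(p x (Function.update b i a)))) : Measurable J := by
  obtain ⟨hE, g, hg, hgE⟩ := aem_core (fun q : X × (∀ i, A i) => p q.1 q.2)
    (fun q => hp_prob q.1 q.2) hp_setwise J M hM
  refine meas_of_cells Q hQ S hS J (fun z x => ⨅ a : A i, ∑ b ∈ B, w z b *
    (c x (Function.update b i a) + β * ∫ y, J y ∂(p x (Function.update b i a)))) ?_ hJ
  intro z
  refine meas_inf (fun q : X × A i => ∑ b ∈ B, w z b * (c q.1 (Function.update b i q.2) +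
    β * ∫ y, J y ∂(p q.1 (Function.update b i q.2)))) ?_ (-(C + β * M)) ?_
  · refine sc_sum B _ fun b _ => ?_
    have hu : Continuous fun q : X × A i => ((q.1, Function.update b i q.2) : X × (∀ i, A i)) :=
      continuous_fst.prodMk (continuous_const.update i continuous_snd)
    refine sc_piece (hE.preimage hu) _
      (fun q => w z b * (c q.1 (Function.update b i q.2) + β * g (q.1, Function.update b i q.2)))
      (fun q => w z b * (c q.1 (Function.update b i q.2))) ?_ ?_ ?_ ?_
    · exact continuous_const.mul ((hc.comp hu).add (continuous_const.mul (hg.comp hu)))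
    · exact continuous_const.mul (hc.comp hu)
    · intro q hq
      have := hgE _ hq
      simp only at this
      simp only [this]
    · intro q hq
      have h0 : ∫ y, J y ∂(p q.1 (Function.update b i q.2)) = 0 := by
        refine integral_undef fun hi => hq ?_
        exact hi.aemeasurable
      simp only [h0]
      ring
  · intro q
    have := wsum_le B (w z) (fun b => c q.1 (Function.update b i q.2) +
      β * ∫ y, J y ∂(p q.1 (Function.update b i q.2))) (fun _ => 0) (hw z) (hw1 z) (C + β * M) ?_
    · simp only [mul_zero, Finset.sum_const_zero, sub_zero] at this
      exact (abs_le.1 this).1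
    · intro b
      have := hp_prob q.1 (Function.update b i q.2)
      have h1 := abs_le.1 (hC q.1 (Function.update b i q.2))
      have h2 := abs_le.1 (int_abs_le (p q.1 (Function.update b i q.2)) J M hM)
      rw [sub_zero, abs_le]
      constructor <;> nlinarith

lemma cell_prob (ν : Measure X) [IsProbabilityMeasure ν] (Q : X → X) (z : X)
    (h : 0 < ν (Q ⁻¹' {z})) : IsProbabilityMeasure (cellMeasure ν Q z) := by
  constructor
  simp [cellMeasure]
  exact ENNReal.inv_mul_cancel h.ne' (measure_ne_top _ _)

lemma cell_ae (ν : Measure X) (Q : X → X) (hQ : Measurable Q) (z : X) :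
    ∀ᵐ x ∂(cellMeasure ν Q z), Q x = z := by
  unfold cellMeasure
  refine Measure.ae_smul_measure ?_ _
  exact ae_restrict_mem (hQ (measurableSet_singleton z))

lemma core_est [Nonempty X] (c : X → (∀ i, A i) → ℝ)
    (hc : Continuous fun q : X × (∀ i, A i) => c q.1 q.2)
    (p : X → (∀ i, A i) → Measure X)
    (hp_prob : ∀ x a, IsProbabilityMeasure (p x a))
    (hp_setwise : ∀ D : Set X, MeasurableSet D →
      Continuous fun q : X × (∀ i, A i) => (p q.1 q.2 D).toReal)
    (β : ℝ) (hβ : 0 ≤ β) (hβ1 : β < 1)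
    (S : Finset X) (Q : X → X) (hQ : Measurable Q) (hS : ∀ x, Q x ∈ S)
    (δ : ℝ) (hδ : 0 ≤ δ) (hQd : ∀ x, dist x (Q x) ≤ δ)
    (ν : Measure X) (hν : IsProbabilityMeasure ν) (hνpos : ∀ z ∈ S, 0 < ν (Q ⁻¹' {z}))
    (w : X → (∀ i, A i) → ℝ) (hw : ∀ z b, 0 ≤ w z b) (B : Finset (∀ i, A i))
    (hw1 : ∀ z, ∑ b ∈ B, w z b = 1)
    (C : ℝ) (hC : ∀ x b, |c x b| ≤ C)
    (i : Fin N) (Ad : Finset (A i)) (hAd : ∀ a, ∃ b ∈ Ad, dist a b ≤ δ)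
    (J J' : X → ℝ) (M M' : ℝ) (hM : ∀ x, |J x| ≤ M) (hM' : ∀ x, |J' x| ≤ M')
    (hJQ : ∀ x, J x = J (Q x))
    (hJ : ∀ z ∈ S, J z = sInf {v : ℝ | ∃ a ∈ Ad, v = ∫ x, (∑ b ∈ B, w z b *
      (c x (Function.update b i a) + β * ∫ y, J y ∂(p x (Function.update b i a))))
      ∂(cellMeasure ν Q z)})
    (hJ' : ∀ x, J' x = ⨅ a : A i, ∑ b ∈ B, w (Q x) b * (c x (Function.update b i a) +
      β * ∫ y, J' y ∂(p x (Function.update b i a))))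
    (η : ℝ) (hη : ∀ x y a b, dist x y + dist a b ≤ 2 * δ →
      |(c x a + β * ∫ u, J u ∂(p x a)) - (c y b + β * ∫ u, J u ∂(p y b))| ≤ η) :
    ⨆ x, |J x - J' x| ≤ 2 * η / (1 - β) := by
  have mJ' : Measurable J' := js_meas c hc p hp_prob hp_setwise β hβ S Q hQ hS w hw B hw1 C hC i
    J' M' hM' hJ'
  have mJ : Measurable J := meas_of_cells Q hQ S hS J (fun z _ => J z)
    (fun z => measurable_const) hJQ
  have cJ := cont_int (fun q : X × (∀ i, A i) => p q.1 q.2)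
    (fun q => hp_prob q.1 q.2) hp_setwise J mJ M hM
  have hbdd : BddAbove (Set.range fun x => |J x - J' x|) := by
    refine ⟨M + M', ?_⟩
    rintro _ ⟨x, rfl⟩
    exact (abs_sub _ _).trans (add_le_add (hM x) (hM' x))
  set D := ⨆ x, |J x - J' x| with hD
  have hDx : ∀ x, |J x - J' x| ≤ D := fun x => le_ciSup hbdd x
  -- the averaged one-step cost
  set Ψ : (X → ℝ) → X → X → A i → ℝ := fun F z x a => ∑ b ∈ B, w z b *
      (c x (Function.update b i a) + β * ∫ y, F y ∂(p x (Function.update b i a))) with hΨ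
  have hΨb : ∀ (F : X → ℝ) (K : ℝ), (∀ x, |F x| ≤ K) → ∀ z x a, |Ψ F z x a| ≤ C + β * K := by
    intro F K hF z x a
    have := wsum_le B (w z) (fun b => c x (Function.update b i a) +
      β * ∫ y, F y ∂(p x (Function.update b i a))) (fun _ => 0) (hw z) (hw1 z) (C + β * K) ?_
    · simpa only [mul_zero, Finset.sum_const_zero, sub_zero] using this
    · intro b
      have := hp_prob x (Function.update b i a)
      have h1 := abs_le.1 (hC x (Function.update b i a))
      have h2 := abs_le.1 (int_abs_le (p x (Function.update b i a)) F K hF)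
      rw [sub_zero, abs_le]
      constructor <;> nlinarith
  have hx : ∀ z x x' a, dist x x' ≤ 2 * δ → |Ψ J z x a - Ψ J z x' a| ≤ η := by
    intro z x x' a hd
    refine wsum_le B (w z) _ _ (hw z) (hw1 z) η fun b => hη _ _ _ _ ?_
    simpa using hd
  have ha : ∀ z x a a', dist a a' ≤ δ → |Ψ J z x a - Ψ J z x a'| ≤ η := by
    intro z x a a' hd
    refine wsum_le B (w z) _ _ (hw z) (hw1 z) η fun b => hη _ _ _ _ ?_
    rw [dist_self, zero_add]
    refine (dist_pi_le_iff (by linarith)).2 fun j => ?_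
    by_cases hj : j = i
    · subst hj; simp; linarith
    · simp [hj, hδ]
  have hcont : ∀ z a, Continuous fun x => Ψ J z x a := by
    intro z a
    refine continuous_finsetSum _ fun b _ => continuous_const.mul ?_
    have hu : Continuous fun x : X => ((x, Function.update b i a) : X × (∀ i, A i)) := by fun_prop
    exact (hc.comp hu).add (continuous_const.mul (cJ.comp hu))
  have hV : ∀ x a, |∫ x', Ψ J (Q x) x' a ∂(cellMeasure ν Q (Q x)) - Ψ J (Q x) x a| ≤ η := by
    intro x a
    have := cell_prob ν Q (Q x) (hνpos _ (hS x))
    have hi : Integrable (fun x' => Ψ J (Q x) x' a) (cellMeasure ν Q (Q x)) :=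
      Integrable.of_bound (hcont _ a).aestronglyMeasurable (C + β * M)
        (ae_of_all _ fun x' => hΨb J M hM _ _ _)
    have e : ∫ x', Ψ J (Q x) x' a ∂(cellMeasure ν Q (Q x)) - Ψ J (Q x) x a
        = ∫ x', (Ψ J (Q x) x' a - Ψ J (Q x) x a) ∂(cellMeasure ν Q (Q x)) := by
      rw [integral_sub hi (integrable_const _)]; simp
    rw [e]
    have := norm_integral_le_of_norm_le_const (μ := cellMeasure ν Q (Q x))
      (f := fun x' => Ψ J (Q x) x' a - Ψ J (Q x) x a) (C := η) ?_
    · simpa using this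
    · filter_upwards [cell_ae ν Q hQ (Q x)] with x' hx'
      refine hx _ _ _ _ ?_
      have h1 := hQd x'
      have h2 := hQd x
      rw [hx'] at h1
      have := dist_triangle_right x' x (Q x)
      linarith
  have hbi : ∀ (F : X → ℝ) (K : ℝ), (∀ x, |F x| ≤ K) → ∀ z x,
      BddBelow (Set.range fun a => Ψ F z x a) := by
    intro F K hF z x
    refine ⟨-(C + β * K), ?_⟩
    rintro _ ⟨a, rfl⟩
    exact (abs_le.1 (hΨb F K hF z x a)).1
  have step1 : ∀ x, |J x - ⨅ a, Ψ J (Q x) x a| ≤ 2 * η := by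
    intro x
    have hη0 : 0 ≤ η := (abs_nonneg _).trans (hV x (Classical.arbitrary _))
    rw [hJQ x, hJ _ (hS x), abs_le]
    constructor
    · suffices h : (⨅ a, Ψ J (Q x) x a) - η ≤ sInf {v : ℝ | ∃ a ∈ Ad, v =
        ∫ x', Ψ J (Q x) x' a ∂(cellMeasure ν Q (Q x))} by
        linarith
      refine le_csInf ?_ ?_
      · obtain ⟨b, hb, -⟩ := hAd (Classical.arbitrary _)
        exact ⟨_, b, hb, rfl⟩
      · rintro _ ⟨a, -, rfl⟩
        have := ciInf_le (hbi J M hM (Q x) x) a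
        have := (abs_le.1 (hV x a)).1
        linarith
    · suffices h : sInf {v : ℝ | ∃ a ∈ Ad, v =
        ∫ x', Ψ J (Q x) x' a ∂(cellMeasure ν Q (Q x))} - 2 * η ≤ (⨅ a, Ψ J (Q x) x a) by
        linarith
      refine le_ciInf fun a => ?_
      obtain ⟨a', ha', hd⟩ := hAd a
      have h1 : sInf {v : ℝ | ∃ a ∈ Ad, v =
        ∫ x', Ψ J (Q x) x' a ∂(cellMeasure ν Q (Q x))} ≤
          ∫ x', Ψ J (Q x) x' a' ∂(cellMeasure ν Q (Q x)) := by
        refine csInf_le ⟨-(C + β * M), ?_⟩ ⟨a', ha', rfl⟩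
        rintro _ ⟨a, -, rfl⟩
        have := cell_prob ν Q (Q x) (hνpos _ (hS x))
        exact (abs_le.1 (int_abs_le _ _ _ fun x' => hΨb J M hM _ _ _)).1
      have h2 := (abs_le.1 (hV x a')).2
      have h3 := (abs_le.1 (ha (Q x) x a a' hd)).1
      linarith
  have hcontr : ∀ z x a, |Ψ J z x a - Ψ J' z x a| ≤ β * D := by
    intro z x a
    refine wsum_le B (w z) _ _ (hw z) (hw1 z) _ fun b => ?_
    have := hp_prob x (Function.update b i a)
    have i1 : Integrable J (p x (Function.update b i a)) :=
      Integrable.of_bound mJ.aestronglyMeasurable M (ae_of_all _ hM)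
    have i2 : Integrable J' (p x (Function.update b i a)) :=
      Integrable.of_bound mJ'.aestronglyMeasurable M' (ae_of_all _ hM')
    rw [add_sub_add_left_eq_sub, ← mul_sub, ← integral_sub i1 i2, abs_mul, abs_of_nonneg hβ]
    exact mul_le_mul_of_nonneg_left (int_abs_le _ _ _ hDx) hβ
  have step2 : ∀ x, |J x - J' x| ≤ 2 * η + β * D := by
    intro x
    have h1 := abs_le.1 (step1 x)
    have h2 : J' x = ⨅ a, Ψ J' (Q x) x a := hJ' x
    have h3 := inf_le_inf_add (Ψ J (Q x) x) (Ψ J' (Q x) x) _ (β * D)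
      (fun a => (abs_le.1 (hΨb J M hM (Q x) x a)).1) (hcontr (Q x) x)
    have h4 := inf_le_inf_add (Ψ J' (Q x) x) (Ψ J (Q x) x) _ (β * D)
      (fun a => (abs_le.1 (hΨb J' M' hM' (Q x) x a)).1)
      (fun a => by rw [abs_sub_comm]; exact hcontr (Q x) x a)
    rw [abs_le]
    constructor <;> linarith
  have hfin : D ≤ 2 * η + β * D := ciSup_le step2
  rw [le_div_iff₀ (by linarith)]
  linarith

end core

/-- Discounted-cost approximation of nonzero-sum Markov games (Theorem 5.1 of the paper):
convergence of the extended finite-model best-response values to the original-model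
discounted best-response values against the extended stationary equilibrium policies. -/
theorem discounted_value_approximation
    -- compact metric state space
    (X : Type*) [MetricSpace X] [CompactSpace X] [Nonempty X]
    [MeasurableSpace X] [BorelSpace X]
    -- compact metric action spaces of the N players
    (N : ℕ) (A : Fin N → Type*) [∀ i, MetricSpace (A i)] [∀ i, CompactSpace (A i)]
    [∀ i, Nonempty (A i)] [∀ i, MeasurableSpace (A i)] [∀ i, BorelSpace (A i)]
    -- bounded continuous one-stage cost functions
    (c : Fin N → X → (∀ i, A i) → ℝ)
    (hc : ∀ i, Continuous fun q : X × (∀ i, A i) => c i q.1 q.2)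
    -- setwise continuous Borel stochastic kernel
    (p : X → (∀ i, A i) → Measure X)
    (hp_prob : ∀ x a, IsProbabilityMeasure (p x a))
    (hp_meas : ∀ D : Set X, MeasurableSet D →
      Measurable fun q : X × (∀ i, A i) => p q.1 q.2 D)
    (hp_setwise : ∀ D : Set X, MeasurableSet D →
      Continuous fun q : X × (∀ i, A i) => (p q.1 q.2 D).toReal)
    -- discount factor
    (β : ℝ) (hβ0 : 0 < β) (hβ1 : β < 1)
    -- quantization data: finite δ-nets, nearest-point quantizer, weighting measures
    (Xd : ℝ → Finset X) (Q : ℝ → X → X) (Ad : ℝ → ∀ i, Finset (A i)) (ν : ℝ → Measure X)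
    (hXd_net : ∀ δ > (0:ℝ), ∀ x : X, ∃ z ∈ Xd δ, dist x z ≤ δ)
    (hQ_mem : ∀ δ > (0:ℝ), ∀ x, Q δ x ∈ Xd δ)
    (hQ_near : ∀ δ > (0:ℝ), ∀ x, ∀ z ∈ Xd δ, dist x (Q δ x) ≤ dist x z)
    (hQ_meas : ∀ δ > (0:ℝ), Measurable (Q δ))
    (hAd_net : ∀ δ > (0:ℝ), ∀ i, ∀ a : A i, ∃ b ∈ Ad δ i, dist a b ≤ δ)
    (hν_prob : ∀ δ > (0:ℝ), IsProbabilityMeasure (ν δ))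
    (hν_pos : ∀ δ > (0:ℝ), ∀ z ∈ Xd δ, 0 < ν δ (Q δ ⁻¹' {z}))
    -- the quantization condition `lim_{δ→0} ω_δ(2δ) = 0`
    (hquant : Tendsto
      (fun δ : ℝ => sSup {v : ℝ | ∃ x y : X, ∃ a b : ∀ i, A i,
        dist x y + dist a b ≤ 2 * δ ∧
        v = tvDist ((p x a).map (Q δ)) ((p y b).map (Q δ))})
      (𝓝[>] 0) (𝓝 0))
    -- (already extended) stationary policies of the finite δ-model: probability measures
    -- supported on the finite action nets, piecewise constant on quantization cells
    (π : ℝ → (i : Fin N) → X → Measure (A i))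
    (hπ_prob : ∀ δ > (0:ℝ), ∀ i x, IsProbabilityMeasure (π δ i x))
    (hπ_supp : ∀ δ > (0:ℝ), ∀ i x, π δ i x (Ad δ i) = 1)
    (hπ_const : ∀ δ > (0:ℝ), ∀ i x, π δ i x = π δ i (Q δ x))
    -- the extended finite-model best-response values Ĵ*_δ(π^{*,-i}_δ;·)
    (Jd : ℝ → Fin N → X → ℝ)
    (hJd_const : ∀ δ > (0:ℝ), ∀ i x, Jd δ i x = Jd δ i (Q δ x))
    -- fixed-point equation of the finite δ-model, per state of the net
    (hJd_rec : ∀ δ > (0:ℝ), ∀ i, ∀ z ∈ Xd δ,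
      Jd δ i z = sInf {v : ℝ | ∃ a ∈ Ad δ i, v =
        ∫ x, (∫ b, (c i x b + β * ∫ y, Jd δ i y ∂(p x b))
            ∂(Measure.pi (Function.update (fun j => π δ j z) i (Measure.dirac a))))
          ∂(cellMeasure (ν δ) (Q δ) z)})
    -- the minimum is attained by the equilibrium mixed action π^{*,i}_δ(z)
    (hJd_attain : ∀ δ > (0:ℝ), ∀ i, ∀ z ∈ Xd δ,
      Jd δ i z =
        ∫ x, (∫ b, (c i x b + β * ∫ y, Jd δ i y ∂(p x b))
            ∂(Measure.pi fun j => π δ j z))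
          ∂(cellMeasure (ν δ) (Q δ) z))
    -- J*(π^{*,-i}_δ;·): the unique bounded fixed point of the original-model
    -- best-response operator against the extended policies
    (Js : ℝ → Fin N → X → ℝ)
    (hJs_bdd : ∀ δ > (0:ℝ), ∀ i, ∃ M : ℝ, ∀ x, |Js δ i x| ≤ M)
    (hJs_fix : ∀ δ > (0:ℝ), ∀ i, ∀ x : X,
      Js δ i x = ⨅ a : A i,
        ∫ b, (c i x b + β * ∫ y, Js δ i y ∂(p x b))
          ∂(Measure.pi (Function.update (fun j => π δ j x) i (Measure.dirac a)))) :
    -- conclusion: uniform convergence of the value functions as δ → 0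
    ∀ i : Fin N,
      Tendsto (fun δ : ℝ => ⨆ x : X, |Jd δ i x - Js δ i x|) (𝓝[>] 0) (𝓝 0) := by
  intro i
  -- bound on the cost
  obtain ⟨C, hC⟩ : ∃ C, ∀ x b, |c i x b| ≤ C := by
    obtain ⟨C, hC⟩ := (isCompact_range (hc i)).isBounded.exists_norm_le
    exact ⟨C, fun x b => hC _ ⟨(x, b), rfl⟩⟩
  have hC0 : 0 ≤ C :=
    (abs_nonneg _).trans (hC (Classical.arbitrary X) (fun _ => Classical.arbitrary _))
  have h1β : 0 < 1 - β := by linarith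
  set K := C / (1 - β) with hK
  have hK0 : 0 ≤ K := div_nonneg hC0 h1β.le
  -- uniform bound on the finite-model values
  have hJK : ∀ δ > (0:ℝ), ∀ x, |Jd δ i x| ≤ K := by
    intro δ hδ
    have hfin : (Set.range fun x => |Jd δ i x|).Finite := by
      refine ((Xd δ).finite_toSet.image fun z => |Jd δ i z|).subset ?_
      rintro _ ⟨x, rfl⟩
      exact ⟨Q δ x, hQ_mem δ hδ x, by simp only [← hJd_const δ hδ i x]⟩
    have hle : ∀ x, |Jd δ i x| ≤ ⨆ x, |Jd δ i x| := fun x => le_ciSup hfin.bddAbove x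
    have hD : (⨆ x, |Jd δ i x|) ≤ C + β * ⨆ x, |Jd δ i x| := by
      refine ciSup_le fun x => ?_
      have h1 := hν_prob δ hδ
      have h2 := cell_prob (ν δ) (Q δ) (Q δ x) (hν_pos δ hδ _ (hQ_mem δ hδ x))
      have h3 := fun j => hπ_prob δ hδ j (Q δ x)
      rw [hJd_const δ hδ i x, hJd_attain δ hδ i _ (hQ_mem δ hδ x)]
      refine int_abs_le _ _ _ fun x' => int_abs_le _ _ _ fun b => ?_
      have h4 := hp_prob x' b
      refine (abs_add_le _ _).trans (add_le_add (hC x' b) ?_)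
      rw [abs_mul, abs_of_pos hβ0]
      exact mul_le_mul_of_nonneg_left (int_abs_le _ _ _ hle) hβ0.le
    intro x
    refine (hle x).trans ?_
    rw [hK, le_div_iff₀ h1β]
    linarith
  set ω : ℝ → ℝ := fun δ => sSup {v : ℝ | ∃ x y : X, ∃ a b : ∀ i, A i,
        dist x y + dist a b ≤ 2 * δ ∧
        v = tvDist ((p x a).map (Q δ)) ((p y b).map (Q δ))} with hω
  -- the estimate for one `δ`
  have main : ∀ δ > (0:ℝ), ∀ ε : ℝ, (∀ x y a b, dist x y + dist a b ≤ 2 * δ →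
      |c i x a - c i y b| ≤ ε) →
      ⨆ x : X, |Jd δ i x - Js δ i x| ≤ 2 * (ε + β * (K * ω δ)) / (1 - β) := by
    intro δ hδ ε hε
    have hex := fun z => int_upd (fun j => π δ j z) (fun j => hπ_prob δ hδ j z) (Ad δ)
      (fun j => hπ_supp δ hδ j z)
    choose w hw hw1 hwφ using hex
    obtain ⟨M', hM'⟩ := hJs_bdd δ hδ i
    refine core_est (c i) (hc i) p hp_prob hp_setwise β hβ0.le hβ1 (Xd δ) (Q δ) (hQ_meas δ hδ)
      (hQ_mem δ hδ) δ hδ.le ?_ (ν δ) (hν_prob δ hδ) (hν_pos δ hδ) w hw _ hw1 C hC i (Ad δ i)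
      (hAd_net δ hδ i) (Jd δ i) (Js δ i) K M' (hJK δ hδ) hM' (hJd_const δ hδ i) ?_ ?_ _ ?_
    · intro x
      obtain ⟨z, hz, hd⟩ := hXd_net δ hδ x
      exact (hQ_near δ hδ x z hz).trans hd
    · intro z hz
      rw [hJd_rec δ hδ i z hz]
      simp only [hwφ]
    · intro x
      rw [hJs_fix δ hδ i x]
      have e : (fun j => π δ j x) = fun j => π δ j (Q δ x) := funext fun j => hπ_const δ hδ j x
      rw [e]
      simp only [hwφ]
    · intro x y a b hd
      have p1 := hp_prob x a
      have p2 := hp_prob y b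
      have h1 := hε x y a b hd
      have h2 := tv_bound (p x a) (p y b) (Q δ) (hQ_meas δ hδ) (Xd δ) (hQ_mem δ hδ) (Jd δ i)
        (hJd_const δ hδ i) K (hJK δ hδ)
      have h3 : tvDist ((p x a).map (Q δ)) ((p y b).map (Q δ)) ≤ ω δ := by
        refine le_csSup ⟨2, ?_⟩ ⟨x, y, a, b, hd, rfl⟩
        rintro _ ⟨x, y, a, b, -, rfl⟩
        have p1 := hp_prob x a
        have p2 := hp_prob y b
        have q1 := Measure.isProbabilityMeasure_map (μ := p x a) (hQ_meas δ hδ).aemeasurable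
        have q2 := Measure.isProbabilityMeasure_map (μ := p y b) (hQ_meas δ hδ).aemeasurable
        exact tv_le_two _ _
      have h4 := h2.trans (mul_le_mul_of_nonneg_left h3 hK0)
      have e : (c i x a + β * ∫ u, Jd δ i u ∂(p x a)) - (c i y b + β * ∫ u, Jd δ i u ∂(p y b)) =
        (c i x a - c i y b) + β * (∫ u, Jd δ i u ∂(p x a) - ∫ u, Jd δ i u ∂(p y b)) := by ring
      rw [e]
      refine (abs_add_le _ _).trans (add_le_add h1 ?_)
      rw [abs_mul, abs_of_pos hβ0]
      exact mul_le_mul_of_nonneg_left h4 hβ0.le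
  rw [Metric.tendsto_nhds]
  intro ε hε
  set ε₁ := ε * (1 - β) / 8 with hε₁
  have hε₁0 : 0 < ε₁ := by positivity
  obtain ⟨r, hr0, hr⟩ := Metric.uniformContinuous_iff.1
    (CompactSpace.uniformContinuous_of_continuous (hc i)) ε₁ hε₁0
  have hω' : Tendsto (fun δ => β * (K * ω δ)) (𝓝[>] 0) (𝓝 0) := by
    simpa using (hquant.const_mul K).const_mul β
  have e1 : ∀ᶠ δ in 𝓝[>] (0:ℝ), δ < r / 2 :=
    mem_nhdsWithin_of_mem_nhds (Iio_mem_nhds (by linarith))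
  have e2 : ∀ᶠ δ in 𝓝[>] (0:ℝ), β * (K * ω δ) < ε₁ := hω'.eventually (Iio_mem_nhds hε₁0)
  filter_upwards [e1, e2, self_mem_nhdsWithin] with δ h1 h2 hδ
  have hm := main δ hδ ε₁ fun x y a b hd => by
    have : dist ((x, a) : X × (∀ i, A i)) (y, b) < r := by
      rw [Prod.dist_eq]
      have d1 : 0 ≤ dist x y := dist_nonneg
      have d2 : 0 ≤ dist a b := dist_nonneg
      exact max_lt (by simp only; linarith) (by simp only; linarith)
    exact (hr this).le
  rw [Real.dist_eq, sub_zero, abs_of_nonneg (Real.iSup_nonneg fun x => abs_nonneg _)]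
  refine lt_of_le_of_lt hm ?_
  rw [div_lt_iff₀ h1β]
  have : ε₁ * 8 = ε * (1 - β) := by rw [hε₁]; ring
  linarith

end
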